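/- Let ℓ be an odd prime, q a prime power coprime to ℓ, t the multiplicative order of q modulo ℓ, n a positive integer, and μ ∈ 𝔛_n. For f ∈ Φ set h_f = gcd(d(f), t). Then v_ℓ(a_μ) ≥ v_ℓ( ⌊n/t⌋! / ∏_{f ∈ Φ} ⌊ |μ(f)|·h_f / t ⌋! ), where a_μ = (∏_{i=1}^{n} (q^i − 1)) / (∏_{f ∈ Φ} ∏_{i=1}^{|μ(f)|} (q^{d(f)·i} − 1)). -/

import Mathlib

/-- The `i`-th part (0-indexed, parts in weakly decreasing order) of the partition whose
multiset of parts is `lam`; `0` if `i` is at least the number of parts. -/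
def partNth (lam : Multiset ℕ) (i : ℕ) : ℕ :=
  ((lam.sort (· ≤ ·)).reverse.getD i 0)

/-- The `j`-th part (0-indexed) of the conjugate partition: the number of parts `> j`. -/
def conjNth (lam : Multiset ℕ) (j : ℕ) : ℕ :=
  (lam.filter (fun m => j < m)).card

/-- The cells `(i, j)` (0-indexed) of the Young diagram of `lam`. -/
def cellsOf (lam : Multiset ℕ) : Finset (ℕ × ℕ) :=
  (Finset.range (Multiset.card lam) ×ˢ Finset.range lam.sum).filter
    (fun c => c.2 < partNth lam c.1)

/-- The hook length of the cell `c = (i, j)` of `lam`: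
`(λᵢ − j) + (λ'ⱼ − i) − 1`. -/
def hookLen (lam : Multiset ℕ) (c : ℕ × ℕ) : ℕ :=
  (partNth lam c.1 - c.2) + (conjNth lam c.2 - c.1) - 1

/-- The product of all hook lengths of `lam`. -/
def hookProd (lam : Multiset ℕ) : ℕ :=
  ∏ c ∈ cellsOf lam, hookLen lam c

/-- `α(λ) = Σᵢ (i − 1)·λᵢ` (1-indexed), i.e. `Σᵢ i·λᵢ` for the 0-indexed parts. -/
def alphaStat (lam : Multiset ℕ) : ℕ :=
  ∑ i ∈ Finset.range (Multiset.card lam), i * partNth lam i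

/-- `𝔣_λ = n! / ∏_{h ∈ H(λ)} |h|`, the degree of the irreducible character of `S_n`
indexed by `λ`, as a rational number. -/
def fDeg (lam : Multiset ℕ) : ℚ :=
  (Nat.factorial lam.sum : ℚ) / (hookProd lam : ℚ)

/-- `d_λ(x) = x^{α(λ)} · ∏_{i=1}^{n} (x^i − 1) / ∏_{h ∈ H(λ)} (x^{|h|} − 1)`. -/
def dDeg (lam : Multiset ℕ) (x : ℕ) : ℚ :=
  (x : ℚ) ^ alphaStat lam * (∏ i ∈ Finset.Icc 1 lam.sum, ((x : ℚ) ^ i - 1)) /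
    ∏ c ∈ cellsOf lam, ((x : ℚ) ^ hookLen lam c - 1)
/-- `μ` is a member of `𝔛_n`: a finitely supported assignment of a partition (given by its
multiset of positive parts) to each monic irreducible polynomial `f ≠ x` over `F`, such that
`Σ_f |μ(f)|·deg f = n`. -/
def IsXn (F : Type*) [Field F] (n : ℕ) (μ : Polynomial F →₀ Multiset ℕ) : Prop :=
  (∀ f ∈ μ.support, f.Monic ∧ Irreducible f ∧ f ≠ Polynomial.X) ∧
  (∀ f : Polynomial F, ∀ m ∈ μ f, 0 < m) ∧
  (μ.sum fun f lam => lam.sum * f.natDegree) = n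

/-- `a_μ = ∏_{i=1}^{n} (q^i − 1) / ∏_{f ∈ Φ} ∏_{i=1}^{|μ(f)|} (q^{d(f)·i} − 1)`. -/
noncomputable def aMu (q : ℕ) {F : Type*} [Field F] (n : ℕ)
    (μ : Polynomial F →₀ Multiset ℕ) : ℚ :=
  (∏ i ∈ Finset.Icc 1 n, ((q : ℚ) ^ i - 1)) /
    ∏ f ∈ μ.support, ∏ i ∈ Finset.Icc 1 (μ f).sum, ((q : ℚ) ^ (f.natDegree * i) - 1)

/-- `ψ_m(x) = ∏_{i=1}^{m} (x^i − 1)`. -/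
def psiPoly (m : ℕ) (x : ℚ) : ℚ := ∏ i ∈ Finset.Icc 1 m, (x ^ i - 1)

/-- `H(λ, x) = x^{α(λ)} / ∏_{h ∈ H(λ)} (x^{|h|} − 1)`. -/
def hFactor (lam : Multiset ℕ) (x : ℚ) : ℚ :=
  x ^ alphaStat lam / ∏ c ∈ cellsOf lam, (x ^ hookLen lam c - 1)

/-- `d_μ = ψ_n(q) · ∏_{f ∈ Φ} H(μ(f), q^{d(f)})`, the degree of the irreducible character of
`GL(n, q)` indexed by `μ`, as a rational number. -/
noncomputable def dMu (q : ℕ) {F : Type*} [Field F] (n : ℕ)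
    (μ : Polynomial F →₀ Multiset ℕ) : ℚ :=
  psiPoly n (q : ℚ) * ∏ f ∈ μ.support, hFactor (μ f) ((q : ℚ) ^ f.natDegree)

/-!
Write `t` for the order of `q` modulo `ℓ`, and let `d`, `m` be positive integers, `h = gcd(d, t)`.
Since `q ^ d` has order `t / h` modulo `ℓ`, only the factors of `ψ_m(q ^ d)` whose index is a
multiple of `t / h` are divisible by `ℓ`. Lifting the exponent in those gives
`v_ℓ(ψ_m(q ^ d)) = M * (a + v_ℓ(D)) + v_ℓ(M!)` with `a = v_ℓ(q ^ t - 1)`, `M = ⌊m * h / t⌋` and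
`D = d / h`. The factorials are exactly those of the claimed bound, so it remains to compare the
other terms: `a + v_ℓ(D) ≤ D * a` because `v_ℓ(D) < D` and `a ≥ 1`, and summing `M * D ≤ m * d / t`
over all `f` yields at most `⌊n / t⌋`.
-/

open Finset
open scoped Nat

lemma sum_Icc_eq_sum_Icc_div {A : Type*} [AddCommMonoid A] {s : ℕ} (hs : 0 < s) {g : ℕ → A}
    (hg : ∀ i, ¬ s ∣ i → g i = 0) (m : ℕ) :
    ∑ i ∈ Icc 1 m, g i = ∑ j ∈ Icc 1 (m / s), g (s * j) := by
  refine (sum_of_injOn (s * ·) (mul_right_injective₀ hs.ne').injOn ?_ ?_ fun _ _ ↦ rfl).symm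
  · intro j hj
    obtain ⟨hj_pos, hj_le⟩ := mem_Icc.1 hj
    exact mem_Icc.2
      ⟨Nat.mul_pos hs hj_pos, (Nat.mul_le_mul_left s hj_le).trans (Nat.mul_div_le m s)⟩
  · intro i hi hi_notMem
    refine hg i fun hsi ↦ hi_notMem ⟨i / s, ?_, Nat.mul_div_cancel' hsi⟩
    obtain ⟨hi_pos, hi_le⟩ := mem_Icc.1 hi
    exact mem_Icc.2 ⟨Nat.div_pos (Nat.le_of_dvd hi_pos hsi) hs, Nat.div_le_div_right hi_le⟩

lemma sum_mul_gcd_div_mul_div_gcd_le {ι : Type*} (s : Finset ι) (m d : ι → ℕ) {t : ℕ}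
    (ht : 0 < t) :
    ∑ i ∈ s, m i * (d i).gcd t / t * (d i / (d i).gcd t) ≤ (∑ i ∈ s, m i * d i) / t := by
  rw [Nat.le_div_iff_mul_le ht, sum_mul]
  refine sum_le_sum fun i _ ↦ ?_
  calc m i * (d i).gcd t / t * (d i / (d i).gcd t) * t
      = m i * (d i).gcd t / t * t * (d i / (d i).gcd t) := by ring
    _ ≤ m i * (d i).gcd t * (d i / (d i).gcd t) := Nat.mul_le_mul_right _ (Nat.div_mul_le_self _ _)
    _ = m i * d i := by rw [mul_assoc, Nat.mul_div_cancel' (Nat.gcd_dvd_left _ _)]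

lemma add_padicValNat_le_mul (p : ℕ) {a D : ℕ} (ha : 0 < a) (hD : D ≠ 0) :
    a + padicValNat p D ≤ D * a := by
  obtain ⟨k, rfl⟩ := Nat.exists_eq_succ_of_ne_zero hD
  have hval : padicValNat p (k + 1) ≤ k := Nat.lt_succ_iff.1 (Nat.padicValNat_lt_self hD)
  calc a + padicValNat p (k + 1) ≤ a + k * a :=
        Nat.add_le_add_left (hval.trans (Nat.le_mul_of_pos_right k ha)) a
    _ = (k + 1) * a := by ring

lemma sum_mul_add_padicValNat_le {ι : Type*} {s : Finset ι} (p : ℕ) {a : ℕ} (ha : 0 < a)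
    (M : ι → ℕ) {D : ι → ℕ} (hD : ∀ i ∈ s, D i ≠ 0) :
    ∑ i ∈ s, M i * (a + padicValNat p (D i)) ≤ (∑ i ∈ s, M i * D i) * a := by
  simp only [sum_mul, mul_assoc]
  exact sum_le_sum fun i hi ↦ Nat.mul_le_mul_left _ (add_padicValNat_le_mul p ha (hD i hi))

lemma psiPoly_ne_zero {x : ℚ} (hx : 1 < x) (m : ℕ) : psiPoly m x ≠ 0 :=
  prod_ne_zero_iff.2 fun _ hi ↦
    sub_ne_zero.2 (one_lt_pow₀ hx (Nat.one_le_iff_ne_zero.1 (mem_Icc.1 hi).1)).ne'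

lemma dvd_pow_sub_one_iff_orderOf_dvd (N : ℕ) {x : ℕ} (hx : 0 < x) (k : ℕ) :
    N ∣ x ^ k - 1 ↔ orderOf (x : ZMod N) ∣ k := by
  rw [orderOf_dvd_iff_pow_eq_one, ← ZMod.natCast_eq_zero_iff, Nat.cast_sub (Nat.one_le_pow _ _ hx),
    Nat.cast_pow, Nat.cast_one, sub_eq_zero]

lemma orderOf_natCast_zmod_pos {N x : ℕ} [NeZero N] (h : x.Coprime N) :
    0 < orderOf (x : ZMod N) :=
  orderOf_pos_iff.2 ((ZMod.isUnit_iff_coprime x N).2 h).isOfFinOrder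

section Valuation

variable {ℓ : ℕ} [Fact ℓ.Prime]

lemma padicValRat_prod {ι : Type*} {s : Finset ι} {g : ι → ℚ} (hg : ∀ i ∈ s, g i ≠ 0) :
    padicValRat ℓ (∏ i ∈ s, g i) = ∑ i ∈ s, padicValRat ℓ (g i) := by
  induction s using Finset.cons_induction with
  | empty => simp
  | cons a s ha ih =>
    rw [forall_mem_cons] at hg
    rw [prod_cons, sum_cons, padicValRat.mul hg.1 (prod_ne_zero_iff.2 hg.2), ih hg.2]

lemma padicValRat_factorial (n : ℕ) :
    padicValRat ℓ (n ! : ℚ) = ∑ j ∈ Icc 1 n, (padicValNat ℓ j : ℤ) := by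
  have hne : ∀ j ∈ Icc 1 n, (j : ℚ) ≠ 0 := fun j hj ↦
    Nat.cast_ne_zero.2 (Nat.one_le_iff_ne_zero.1 (mem_Icc.1 hj).1)
  rw [← prod_Ico_id_eq_factorial, Ico_add_one_right_eq_Icc, Nat.cast_prod, padicValRat_prod hne]
  simp only [padicValRat.of_nat]

variable {q t : ℕ}

lemma padicValNat_pow_orderOf_sub_one_pos (hq : 1 < q) (hco : q.Coprime ℓ)
    (ht : t = orderOf (q : ZMod ℓ)) : 0 < padicValNat ℓ (q ^ t - 1) := by
  have ht_pos : 0 < t := ht ▸ orderOf_natCast_zmod_pos hco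
  exact one_le_padicValNat_of_dvd (Nat.sub_ne_zero_of_lt (Nat.one_lt_pow ht_pos.ne' hq))
    ((dvd_pow_sub_one_iff_orderOf_dvd ℓ hq.le t).2 ht.symm.dvd)

lemma padicValNat_pow_orderOf_mul_sub_one (hodd : Odd ℓ) (hq : 1 < q) (hco : q.Coprime ℓ)
    (ht : t = orderOf (q : ZMod ℓ)) {k : ℕ} (hk : k ≠ 0) :
    padicValNat ℓ (q ^ (t * k) - 1) = padicValNat ℓ (q ^ t - 1) + padicValNat ℓ k := by
  have hℓ : ℓ.Prime := Fact.out
  have ht_pos : 0 < t := ht ▸ orderOf_natCast_zmod_pos hco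
  have hdvd : ℓ ∣ q ^ t - 1 := (dvd_pow_sub_one_iff_orderOf_dvd ℓ hq.le t).2 ht.symm.dvd
  have hnot_dvd : ¬ ℓ ∣ q ^ t := hℓ.coprime_iff_not_dvd.1 (hco.symm.pow_right t)
  simpa only [one_pow, ← pow_mul] using
    padicValNat.pow_sub_pow hodd (Nat.one_lt_pow ht_pos.ne' hq) hdvd hnot_dvd hk

lemma padicValRat_psiPoly (hodd : Odd ℓ) (hq : 1 < q) (hco : q.Coprime ℓ)
    (ht : t = orderOf (q : ZMod ℓ)) (m : ℕ) :
    padicValRat ℓ (psiPoly m q) =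
      (m / t : ℕ) * (padicValNat ℓ (q ^ t - 1) : ℤ) + padicValRat ℓ ((m / t)! : ℚ) := by
  have ht_pos : 0 < t := ht ▸ orderOf_natCast_zmod_pos hco
  have hvanish : ∀ i, ¬ t ∣ i → (padicValNat ℓ (q ^ i - 1) : ℤ) = 0 := fun i hi ↦ by
    rw [ht, ← dvd_pow_sub_one_iff_orderOf_dvd ℓ hq.le] at hi
    rw [padicValNat.eq_zero_of_not_dvd hi, Nat.cast_zero]
  have hcast : ∀ i, (q : ℚ) ^ i - 1 = ((q ^ i - 1 : ℕ) : ℚ) := fun i ↦ by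
    rw [Nat.cast_sub (Nat.one_le_pow _ _ hq.le), Nat.cast_pow, Nat.cast_one]
  calc padicValRat ℓ (psiPoly m q)
      = ∑ i ∈ Icc 1 m, (padicValNat ℓ (q ^ i - 1) : ℤ) := by
        rw [psiPoly, padicValRat_prod (prod_ne_zero_iff.1 (psiPoly_ne_zero (mod_cast hq) m))]
        simp only [hcast, padicValRat.of_nat]
    _ = ∑ j ∈ Icc 1 (m / t), (padicValNat ℓ (q ^ (t * j) - 1) : ℤ) :=
        sum_Icc_eq_sum_Icc_div ht_pos hvanish m
    _ = ∑ j ∈ Icc 1 (m / t), ((padicValNat ℓ (q ^ t - 1) : ℤ) + padicValNat ℓ j) :=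
        sum_congr rfl fun j hj ↦ mod_cast padicValNat_pow_orderOf_mul_sub_one hodd hq hco ht
          (Nat.one_le_iff_ne_zero.1 (mem_Icc.1 hj).1)
    _ = (m / t : ℕ) * (padicValNat ℓ (q ^ t - 1) : ℤ) + padicValRat ℓ ((m / t)! : ℚ) := by
        rw [sum_add_distrib, sum_const, Nat.card_Icc, Nat.add_sub_cancel, nsmul_eq_mul,
          padicValRat_factorial]

lemma padicValRat_psiPoly_pow (hodd : Odd ℓ) (hq : 1 < q) (hco : q.Coprime ℓ)
    (ht : t = orderOf (q : ZMod ℓ)) {d : ℕ} (hd : 0 < d) (m : ℕ) :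
    padicValRat ℓ (psiPoly m ((q : ℚ) ^ d)) =
      (m * d.gcd t / t : ℕ) *
          ((padicValNat ℓ (q ^ t - 1) + padicValNat ℓ (d / d.gcd t) : ℕ) : ℤ) +
        padicValRat ℓ ((m * d.gcd t / t)! : ℚ) := by
  have horder : t / d.gcd t = orderOf ((q ^ d : ℕ) : ZMod ℓ) := by
    rw [Nat.cast_pow, orderOf_pow' _ hd.ne', Nat.gcd_comm, ht]
  have hfloor : m * d.gcd t / t = m / (t / d.gcd t) := by
    rw [← Nat.mul_div_mul_right m (t / d.gcd t) (Nat.gcd_pos_of_pos_left t hd),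
      Nat.div_mul_cancel (Nat.gcd_dvd_right d t)]
  have hexponent : d * (t / d.gcd t) = t * (d / d.gcd t) := by
    rw [← Nat.mul_div_assoc _ (Nat.gcd_dvd_right d t), mul_comm d t,
      Nat.mul_div_assoc _ (Nat.gcd_dvd_left d t)]
  have hval : padicValNat ℓ (q ^ t - 1) + padicValNat ℓ (d / d.gcd t) =
      padicValNat ℓ ((q ^ d) ^ (t / d.gcd t) - 1) := by
    rw [← pow_mul, hexponent, padicValNat_pow_orderOf_mul_sub_one hodd hq hco ht
      (Nat.div_gcd_pos_of_pos_left t hd).ne']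
  rw [hval, hfloor, ← Nat.cast_pow]
  exact padicValRat_psiPoly hodd (Nat.one_lt_pow hd.ne' hq) (hco.pow_left d) horder m

theorem ell_adic_valuation_of_aMu_general (hodd : Odd ℓ) (hq : 1 < q) (hco : q.Coprime ℓ)
    (ht : t = orderOf (q : ZMod ℓ)) {ι : Type*} {s : Finset ι} {m d : ι → ℕ}
    (hd : ∀ i ∈ s, 0 < d i) {n : ℕ} (hn : ∑ i ∈ s, m i * d i ≤ n) :
    padicValRat ℓ (((n / t)! : ℚ) / ∏ i ∈ s, ((m i * (d i).gcd t / t)! : ℚ)) ≤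
      padicValRat ℓ (psiPoly n q / ∏ i ∈ s, psiPoly (m i) ((q : ℚ) ^ d i)) := by
  have hq' : (1 : ℚ) < q := mod_cast hq
  have hpsi : ∀ i ∈ s, psiPoly (m i) ((q : ℚ) ^ d i) ≠ 0 := fun i hi ↦
    psiPoly_ne_zero (one_lt_pow₀ hq' (hd i hi).ne') _
  have hfact : ∀ k : ℕ, (k ! : ℚ) ≠ 0 := fun k ↦ Nat.cast_ne_zero.2 k.factorial_ne_zero
  have hfloor : ∑ i ∈ s, m i * (d i).gcd t / t * (d i / (d i).gcd t) ≤ n / t :=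
    (sum_mul_gcd_div_mul_div_gcd_le s m d (ht ▸ orderOf_natCast_zmod_pos hco)).trans
      (Nat.div_le_div_right hn)
  have hmain : ∑ i ∈ s, m i * (d i).gcd t / t *
      (padicValNat ℓ (q ^ t - 1) + padicValNat ℓ (d i / (d i).gcd t)) ≤
        n / t * padicValNat ℓ (q ^ t - 1) :=
    (sum_mul_add_padicValNat_le ℓ (padicValNat_pow_orderOf_sub_one_pos hq hco ht) _ fun i hi ↦
      (Nat.div_gcd_pos_of_pos_left t (hd i hi)).ne').trans (Nat.mul_le_mul_right _ hfloor)
  rw [padicValRat.div (hfact _) (prod_ne_zero_iff.2 fun _ _ ↦ hfact _),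
    padicValRat.div (psiPoly_ne_zero hq' n) (prod_ne_zero_iff.2 hpsi),
    padicValRat_prod fun _ _ ↦ hfact _, padicValRat_prod hpsi, padicValRat_psiPoly hodd hq hco ht,
    sum_congr rfl fun i hi ↦ padicValRat_psiPoly_pow hodd hq hco ht (hd i hi) (m i),
    sum_add_distrib]
  zify at hmain ⊢
  linarith

end Valuation

theorem ell_adic_valuation_of_aMu
    (ℓ : ℕ) (hℓ : ℓ.Prime) (hodd : Odd ℓ)
    (q : ℕ) (hq : IsPrimePow q) (hco : Nat.Coprime q ℓ)
    (t : ℕ) (ht : t = orderOf (q : ZMod ℓ))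
    (F : Type*) [Field F] [Fintype F] (hFq : Fintype.card F = q)
    (n : ℕ) (hn : 0 < n) (μ : Polynomial F →₀ Multiset ℕ) (hμ : IsXn F n μ) :
    padicValRat ℓ
        ((Nat.factorial (n / t) : ℚ) /
          ∏ f ∈ μ.support,
            (Nat.factorial ((μ f).sum * Nat.gcd f.natDegree t / t) : ℚ)) ≤
      padicValRat ℓ (aMu q n μ) := by
  obtain ⟨hΦ, -, hsum⟩ := hμ
  have : Fact ℓ.Prime := ⟨hℓ⟩
  simpa only [aMu, psiPoly, pow_mul] using ell_adic_valuation_of_aMu_general hodd hq.one_lt hco ht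
    (fun f hf ↦ (hΦ f hf).2.1.natDegree_pos) hsum.le
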